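/- Let u₁, …, uₙ and v₁, …, vₘ be wellformed sublevels. Then max(⟦u₁⟧σ, …, ⟦uₙ⟧σ) ≤ max(⟦v₁⟧σ, …, ⟦vₘ⟧σ) holds for every valuation σ (empty maxima being 0) if and only if for every index i there exists an index j with uᵢ ≤_T vⱼ. -/

import Mathlib

/-- The impredicative maximum on natural numbers. -/
def imaxN : ℕ → ℕ → ℕ
  | _, 0 => 0
  | i, (j+1) => max i (j+1)

/-- Sublevels A(E,x,S) and B(E,S). -/
inductive SubLvl where
  | A : Finset ℕ → ℕ → ℕ → SubLvl
  | B : Finset ℕ → ℕ → SubLvl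
deriving DecidableEq

/-- Value of a sublevel under a valuation. -/
def evalS (σ : ℕ → ℕ) : SubLvl → ℕ
  | .A E x S => if ∃ y ∈ E, σ y = 0 then 0 else σ x + S
  | .B E S => if ∃ y ∈ E, σ y = 0 then 0 else S

/-- Wellformed sublevels. -/
def Wf : SubLvl → Prop
  | .A E x _ => x ∈ E
  | .B _ S => 0 < S

/-- Semantic comparison of sublevels. -/
def leT (u v : SubLvl) : Prop := ∀ σ : ℕ → ℕ, evalS σ u ≤ evalS σ v

/-- Maximum of a list of naturals, 0 for the empty list. -/
def listMax (l : List ℕ) : ℕ := l.foldr max 0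

/-!
A wellformed sublevel `u` is decided by a single test valuation `σ`: for all `v` with bounded
constants, `0 < ⟦u⟧σ ≤ ⟦v⟧σ` already forces `u ≤_T v`. The support of `σ` is exactly the variable
set `E` of `u`, so a nonzero `⟦v⟧σ` forces the variable set of `v` into `E`. For `B(E,S)` take the
least such valuation, the indicator of `E`. For `A(E,x,S)` raise its value at `x` beyond the
constants of all the `vⱼ`: then only a sublevel of the form `A(F,x,T)` can reach `⟦u⟧σ`. Since
`⟦u⟧σ > 0`, a maximum bounding `⟦u⟧σ` is attained by some `vⱼ` with `⟦u⟧σ ≤ ⟦vⱼ⟧σ`.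
-/

theorem listMax_le_iff {l : List ℕ} {b : ℕ} : listMax l ≤ b ↔ ∀ a ∈ l, a ≤ b := by
  induction l with
  | nil => simp [listMax]
  | cons a l ih => simpa [listMax] using fun _ => ih

theorem le_listMax_of_mem {l : List ℕ} {a : ℕ} (ha : a ∈ l) : a ≤ listMax l :=
  listMax_le_iff.1 le_rfl a ha

theorem exists_mem_le_of_le_listMax {l : List ℕ} {c : ℕ} (hc : 0 < c) (h : c ≤ listMax l) :
    ∃ a ∈ l, c ≤ a := by
  by_contra! hlt
  have hmax : listMax l ≤ c - 1 := listMax_le_iff.2 fun a ha => Nat.le_sub_one_of_lt (hlt a ha)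
  lia

theorem indicator_one_le_of_subset_support {α : Type*} {s : Set α} {f : α → ℕ}
    (hs : s ⊆ Function.support f) : s.indicator 1 ≤ f :=
  Set.indicator_le fun _ ha => Nat.one_le_iff_ne_zero.2 (hs ha)

namespace SubLvl

/-- The set `E` of variables of `A(E,x,S)` or `B(E,S)`, at the zeros of which the sublevel
vanishes. -/
def guard : SubLvl → Finset ℕ
  | .A E _ _ => E
  | .B E _ => E

/-- The constant `S` of `A(E,x,S)` or `B(E,S)`. -/
def offset : SubLvl → ℕ
  | .A _ _ S => S
  | .B _ S => S

/-- The value of a sublevel under a valuation that is nonzero on its guard: `σ x + S` for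
`A(E,x,S)` and `S` for `B(E,S)`. -/
def body (σ : ℕ → ℕ) : SubLvl → ℕ
  | .A _ x S => σ x + S
  | .B _ S => S

variable {σ τ : ℕ → ℕ} {u v : SubLvl}

theorem body_mono (v : SubLvl) (h : σ ≤ τ) : v.body σ ≤ v.body τ := by
  cases v with
  | A F y T => exact Nat.add_le_add_right (h y) T
  | B F T => exact le_rfl

theorem evalS_eq_body (h : ↑u.guard ⊆ Function.support σ) : evalS σ u = u.body σ := by
  have hnone : ¬∃ y ∈ u.guard, σ y = 0 := fun ⟨y, hy, hzero⟩ => h hy hzero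
  cases u <;> exact if_neg hnone

theorem guard_subset_support (h : 0 < evalS σ u) : ↑u.guard ⊆ Function.support σ := by
  intro y hy hzero
  have hsome : ∃ y ∈ u.guard, σ y = 0 := ⟨y, hy, hzero⟩
  refine h.ne' ?_
  cases u <;> exact if_pos hsome

theorem leT_of_guard_subset (hguard : v.guard ⊆ u.guard)
    (hbody : ∀ τ, ↑u.guard ⊆ Function.support τ → u.body τ ≤ v.body τ) : leT u v := by
  intro τ
  obtain hzero | hpos := (evalS τ u).eq_zero_or_pos
  · exact hzero.trans_le (Nat.zero_le _)
  · have hu := guard_subset_support hpos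
    have hv : ↑v.guard ⊆ Function.support τ := (Finset.coe_subset.2 hguard).trans hu
    rw [evalS_eq_body hu, evalS_eq_body hv]
    exact hbody τ hu

theorem leT_of_support_eq_guard (hσ : Function.support σ = u.guard) (hpos : 0 < u.body σ)
    (hle : evalS σ u ≤ evalS σ v)
    (hbody : u.body σ ≤ v.body σ → ∀ τ, ↑u.guard ⊆ Function.support τ → u.body τ ≤ v.body τ) :
    leT u v := by
  have hu : evalS σ u = u.body σ := evalS_eq_body hσ.ge
  have hv : ↑v.guard ⊆ Function.support σ := guard_subset_support (hpos.trans_le (hu ▸ hle))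
  rw [hu, evalS_eq_body hv] at hle
  exact leT_of_guard_subset (Finset.coe_subset.1 (hv.trans hσ.le)) (hbody hle)

/-- The valuation with value `N` at `x`, `1` on the rest of `E` and `0` elsewhere, which tests
for domination of `A(E,x,S)`. -/
noncomputable def spike (E : Finset ℕ) (x N : ℕ) : ℕ → ℕ :=
  Function.update ((E : Set ℕ).indicator 1) x N

section TestValuations

variable {E : Finset ℕ} {x y S N : ℕ}

theorem leT_B_of_evalS_le (hS : 0 < S)
    (hle : evalS ((E : Set ℕ).indicator 1) (.B E S) ≤ evalS ((E : Set ℕ).indicator 1) v) :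
    leT (.B E S) v := by
  have hsupport : Function.support ((E : Set ℕ).indicator (1 : ℕ → ℕ)) = E := by simp
  exact leT_of_support_eq_guard hsupport hS hle fun h τ hτ =>
    h.trans (v.body_mono (indicator_one_le_of_subset_support hτ))

theorem spike_self : spike E x N x = N :=
  Function.update_self ..

theorem spike_le_one (hyx : y ≠ x) : spike E x N y ≤ 1 := by
  rw [spike, Function.update_of_ne hyx]
  exact Set.indicator_le_self' (fun _ _ => Nat.zero_le 1) y

theorem support_spike (hx : x ∈ E) (hN : N ≠ 0) : Function.support (spike E x N) = E := by
  rw [spike, Function.support_update_of_ne_zero _ _ hN]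
  simpa using hx

theorem body_A_le_of_body_spike_le (hN : v.offset + 1 < N)
    (hle : (A E x S).body (spike E x N) ≤ v.body (spike E x N)) (τ : ℕ → ℕ) :
    (A E x S).body τ ≤ v.body τ := by
  cases v with
  | B F T =>
    simp only [body, offset, spike_self] at hle hN
    lia
  | A F y T =>
    simp only [body, offset, spike_self] at hle hN ⊢
    obtain rfl | hyx := eq_or_ne y x
    · rw [spike_self] at hle
      lia
    · have hy : spike E x N y ≤ 1 := spike_le_one hyx
      lia

theorem leT_A_of_evalS_le (hx : x ∈ E) (hN : v.offset + 1 < N)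
    (hle : evalS (spike E x N) (.A E x S) ≤ evalS (spike E x N) v) : leT (.A E x S) v := by
  have hpos : 0 < (A E x S).body (spike E x N) := by
    simp only [body, spike_self]
    lia
  exact leT_of_support_eq_guard (support_spike hx (by lia)) hpos hle
    fun h τ _ => body_A_le_of_body_spike_le hN h τ

end TestValuations

theorem exists_valuation_forall_leT (hu : Wf u) (n : ℕ) :
    ∃ σ, 0 < evalS σ u ∧ ∀ v : SubLvl, v.offset ≤ n → evalS σ u ≤ evalS σ v → leT u v := by
  cases u with
  | A E x S =>
    refine ⟨spike E x (n + 2), ?_, fun v hv hle => leT_A_of_evalS_le hu (by lia) hle⟩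
    have hguard : ↑(A E x S).guard ⊆ Function.support (spike E x (n + 2)) :=
      (support_spike hu (by lia)).ge
    simp [evalS_eq_body hguard, body, spike_self]
  | B E S =>
    refine ⟨(E : Set ℕ).indicator 1, ?_, fun v _ hle => leT_B_of_evalS_le hu hle⟩
    rw [evalS_eq_body (by simp [guard])]
    exact hu

theorem exists_leT_of_evalS_le_listMax {vs : List SubLvl} (hu : Wf u)
    (h : ∀ σ, evalS σ u ≤ listMax (vs.map (evalS σ))) : ∃ v ∈ vs, leT u v := by
  obtain ⟨σ, hpos, hσ⟩ := exists_valuation_forall_leT hu (listMax (vs.map offset))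
  obtain ⟨a, ha, hle⟩ := exists_mem_le_of_le_listMax hpos (h σ)
  obtain ⟨v, hv, rfl⟩ := List.mem_map.1 ha
  exact ⟨v, hv, hσ v (le_listMax_of_mem (List.mem_map_of_mem hv)) hle⟩

end SubLvl

theorem max_le_max_iff_general (us vs : List SubLvl) (hus : ∀ u ∈ us, Wf u) :
    (∀ σ : ℕ → ℕ, listMax (us.map (evalS σ)) ≤ listMax (vs.map (evalS σ))) ↔
      ∀ u ∈ us, ∃ v ∈ vs, leT u v := by
  simp only [listMax_le_iff, List.forall_mem_map]
  constructor
  · exact fun h u hu => SubLvl.exists_leT_of_evalS_le_listMax (hus u hu) fun σ => h σ u hu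
  · intro h σ u hu
    obtain ⟨v, hv, hle⟩ := h u hu
    exact (hle σ).trans (le_listMax_of_mem (List.mem_map_of_mem hv))

theorem max_le_max_iff (us vs : List SubLvl)
    (hus : ∀ u ∈ us, Wf u) (hvs : ∀ v ∈ vs, Wf v) :
    (∀ σ : ℕ → ℕ, listMax (us.map (evalS σ)) ≤ listMax (vs.map (evalS σ))) ↔
      ∀ u ∈ us, ∃ v ∈ vs, leT u v :=
  max_le_max_iff_general us vs hus
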